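/- Suppose 0 < ε < ε₀, f ∈ 𝔚_{ε₀}, and ∫_{−∞}^u f'''(t)e^{t/ε}dt ≤ 0 for every u ∈ ℝ. Then for every x = (x₁,x₂) ∈ Ω_ε, B_ε(x; f) = m_R(u)·(x₁ − u) + f(u), where u = u_R(x) = x₁ + ε − √(ε² − (x₂ − x₁²)) and m_R(u) = ε⁻¹e^{−u/ε}∫_{−∞}^u f'(t)e^{t/ε}dt. -/

import Mathlib

open MeasureTheory Set Real

/-- The average of `φ` over the interval with endpoints `a`, `b`. -/
noncomputable def intAvg (φ : ℝ → ℝ) (a b : ℝ) : ℝ := (∫ t in a..b, φ t) / (b - a)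

/-- `φ` belongs to the ball of radius `ε` of (quadratic-norm) BMO on the interval `(l, r)`. -/
def memBMOe (ε l r : ℝ) (φ : ℝ → ℝ) : Prop :=
  IntegrableOn φ (Ioo l r) ∧
  IntegrableOn (fun t => (φ t) ^ 2) (Ioo l r) ∧
  ∀ c d : ℝ, l ≤ c → c < d → d ≤ r →
    intAvg (fun t => (φ t) ^ 2) c d - (intAvg φ c d) ^ 2 ≤ ε ^ 2

/-- The Bellman function, computed with the interval `I = (0,1)`. -/
noncomputable def bellmanFn (ε : ℝ) (f : ℝ → ℝ) (x₁ x₂ : ℝ) : ℝ :=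
  sSup {y | ∃ φ : ℝ → ℝ, memBMOe ε 0 1 φ ∧
    IntegrableOn (fun t => f (φ t)) (Ioo 0 1) ∧
    intAvg φ 0 1 = x₁ ∧ intAvg (fun t => (φ t) ^ 2) 0 1 = x₂ ∧
    y = intAvg (fun t => f (φ t)) 0 1}

/-- The parabolic strip `Ω_ε`. -/
def parabStrip (ε : ℝ) : Set (ℝ × ℝ) := {x | x.1 ^ 2 ≤ x.2 ∧ x.2 ≤ x.1 ^ 2 + ε ^ 2}

/-- The parameter of the right tangent through `x`. -/
noncomputable def uRpt (ε : ℝ) (x : ℝ × ℝ) : ℝ :=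
  x.1 + ε - Real.sqrt (ε ^ 2 - (x.2 - x.1 ^ 2))

/-- The class `𝔚_{ε₀}`. -/
def memWcl (ε₀ : ℝ) (f f3 : ℝ → ℝ) : Prop :=
  ContDiff ℝ 2 f ∧
  (∀ x y : ℝ, x ≤ y → deriv (deriv f) y - deriv (deriv f) x = ∫ t in x..y, f3 t) ∧
  Integrable (fun t => f t * Real.exp (-|t| / ε₀)) ∧
  Integrable (fun t => deriv f t * Real.exp (-|t| / ε₀)) ∧
  Integrable (fun t => deriv (deriv f) t * Real.exp (-|t| / ε₀)) ∧
  Integrable (fun t => f3 t * Real.exp (-|t| / ε₀))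

lemma open_int_nonpos (U : Set ℝ) (hU : IsOpen U) (hbb : BddBelow U) (hba : BddAbove U)
    (g : ℝ → ℝ) (hg : IntegrableOn g U)
    (h : ∀ a b : ℝ, a < b → Ioo a b ⊆ U → a ∉ U → b ∉ U → ∫ t in Ioo a b, g t ≤ 0) :
    ∫ t in U, g t ≤ 0 := by
  let C : Set (Set ℝ) := (connectedComponentIn U) '' U
  have hopen : ∀ s ∈ C, IsOpen s := by
    rintro s ⟨x, hx, rfl⟩
    exact hU.connectedComponentIn
  have hne : ∀ s ∈ C, s.Nonempty := by
    rintro s ⟨x, hx, rfl⟩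
    exact ⟨x, mem_connectedComponentIn hx⟩
  have hdis : C.PairwiseDisjoint id := by
    rintro s ⟨x, hx, rfl⟩ t ⟨y, hy, rfl⟩ hne
    by_contra hcon
    rw [Function.onFun, id, id, Set.not_disjoint_iff] at hcon
    obtain ⟨z, hz1, hz2⟩ := hcon
    exact hne ((connectedComponentIn_eq hz1).trans (connectedComponentIn_eq hz2).symm)
  have hcount : C.Countable := hdis.countable_of_isOpen hopen hne
  have hun : U = ⋃ s : C, (s : Set ℝ) := by
    ext z
    simp only [mem_iUnion]
    constructor
    · intro hz
      exact ⟨⟨_, z, hz, rfl⟩, mem_connectedComponentIn hz⟩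
    · rintro ⟨⟨s, x, hx, rfl⟩, hz⟩
      exact connectedComponentIn_subset U x hz
  have : Countable C := hcount
  rw [hun, integral_iUnion (s := fun s : C => (s : Set ℝ)) (fun s => (hopen s s.2).measurableSet)
    (fun s t hst => hdis s.2 t.2 (fun e => hst (Subtype.ext e))) (hun ▸ hg)]
  apply tsum_nonpos
  rintro ⟨s, x, hx, rfl⟩
  set s := connectedComponentIn U x with hs
  have hsU : s ⊆ U := connectedComponentIn_subset U x
  have hxs : x ∈ s := mem_connectedComponentIn hx
  have hso : IsOpen s := hU.connectedComponentIn
  have hsc : IsConnected s := isConnected_connectedComponentIn_iff.2 hx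
  have hsb : BddBelow s := hbb.mono hsU
  have hsa : BddAbove s := hba.mono hsU
  have hinf : sInf s ∉ U := by
    intro hm
    obtain ⟨δ, hδ, hb⟩ := Metric.isOpen_iff.1 hU _ hm
    have hle : sInf s ≤ x := csInf_le hsb hxs
    have hsub : Ioc (sInf s - δ/2) x ⊆ s := by
      apply IsPreconnected.subset_connectedComponentIn isPreconnected_Ioc
      · exact ⟨by linarith, le_rfl⟩
      · intro y hy
        rcases lt_or_ge (sInf s) y with h1 | h1
        · rcases eq_or_lt_of_le hy.2 with h2 | h2
          · rw [h2]; exact hx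
          · exact hsU (hsc.Ioo_csInf_csSup_subset hsb hsa ⟨h1, h2.trans_le (le_csSup hsa hxs)⟩)
        · apply hb
          rw [Metric.mem_ball, Real.dist_eq, abs_lt]
          constructor <;> linarith [hy.1]
    have := csInf_le hsb (hsub (show sInf s - δ/4 ∈ _ from ⟨by linarith, by linarith⟩))
    linarith
  have hsup : sSup s ∉ U := by
    intro hm
    obtain ⟨δ, hδ, hb⟩ := Metric.isOpen_iff.1 hU _ hm
    have hle : x ≤ sSup s := le_csSup hsa hxs
    have hsub : Ico x (sSup s + δ/2) ⊆ s := by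
      apply IsPreconnected.subset_connectedComponentIn isPreconnected_Ico
      · exact ⟨le_rfl, by linarith⟩
      · intro y hy
        rcases lt_or_ge y (sSup s) with h1 | h1
        · rcases eq_or_lt_of_le hy.1 with h2 | h2
          · rw [← h2]; exact hx
          · exact hsU (hsc.Ioo_csInf_csSup_subset hsb hsa ⟨(csInf_le hsb hxs).trans_lt h2, h1⟩)
        · apply hb
          rw [Metric.mem_ball, Real.dist_eq, abs_lt]
          constructor <;> linarith [hy.2]
    have := le_csSup hsa (hsub (show sSup s + δ/4 ∈ _ from ⟨by linarith, by linarith⟩))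
    linarith
  have heq : s = Ioo (sInf s) (sSup s) := by
    apply Subset.antisymm
    · intro y hy
      refine ⟨lt_of_le_of_ne (csInf_le hsb hy) ?_, lt_of_le_of_ne (le_csSup hsa hy) ?_⟩
      · intro e; exact hinf (e ▸ hsU hy)
      · intro e; exact hsup (e ▸ hsU hy)
    · exact hsc.Ioo_csInf_csSup_subset hsb hsa
  show ∫ t in s, g t ≤ 0
  rw [heq]
  have hxI := heq ▸ hxs
  refine h _ _ (hxI.1.trans hxI.2) (heq ▸ hsU) hinf hsup

lemma bmo_block (ε : ℝ) (ψ : ℝ → ℝ) (c d : ℝ) (hcd : c ≤ d)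
    (hi : IntervalIntegrable ψ volume c d) (hi2 : IntervalIntegrable (fun t => ψ t ^ 2) volume c d)
    (hv : c < d → intAvg (fun t => ψ t ^ 2) c d - (intAvg ψ c d) ^ 2 ≤ ε ^ 2)
    (hz : ∫ t in c..d, (ψ t - ε) = 0) :
    ∫ t in c..d, (ψ t ^ 2 - 2 * ε * ψ t) ≤ 0 := by
  rcases eq_or_lt_of_le hcd with rfl | hlt
  · simp
  have hv := hv hlt
  rw [intervalIntegral.integral_sub hi (by simp), intervalIntegral.integral_const, smul_eq_mul] at hz
  rw [intervalIntegral.integral_sub hi2 (hi.const_mul _), intervalIntegral.integral_const_mul]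
  unfold intAvg at hv
  have h1 : ∫ t in c..d, ψ t = (d - c) * ε := by linarith
  rw [h1] at hv ⊢
  have hpos : 0 < d - c := by linarith
  rw [mul_div_cancel_left₀ _ hpos.ne', div_sub' hpos.ne', div_le_iff₀ hpos] at hv
  nlinarith

noncomputable def posG (ε y : ℝ) : ℝ := (max y 0) ^ 2 - 2 * ε * max y 0

lemma posG_le (ε y : ℝ) (hε : 0 < ε) : posG ε y ≤ y ^ 2 - 2 * ε * y := by
  unfold posG
  rcases le_total y 0 with h | h
  · rw [max_eq_right h]; nlinarith
  · rw [max_eq_left h]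

lemma posG_nonpos (ε y : ℝ) (hε : 0 < ε) (h : y ≤ 2 * ε) : posG ε y ≤ 0 := by
  unfold posG
  rcases le_total y 0 with h' | h'
  · rw [max_eq_right h']; nlinarith
  · rw [max_eq_left h']; nlinarith

lemma posG_abs (ε y : ℝ) (hε : 0 < ε) : |posG ε y| ≤ y ^ 2 + 2 * ε * |y| := by
  unfold posG
  have h1 : |max y 0| ≤ |y| := by
    rcases le_total y 0 with h' | h'
    · rw [max_eq_right h']; simp
    · rw [max_eq_left h']
  have h2 : (max y 0) ^ 2 ≤ y ^ 2 := sq_le_sq.2 h1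
  have h3 : 0 ≤ max y 0 := le_max_right _ _
  rw [abs_of_nonneg h3] at h1
  rw [abs_le]
  have := mul_le_mul_of_nonneg_left h1 hε.le
  have := mul_nonneg hε.le h3
  constructor <;> nlinarith [sq_nonneg y, sq_nonneg (max y 0)]

lemma posG_cont (ε : ℝ) : Continuous (posG ε) := by
  unfold posG; fun_prop

lemma posG_int (ε : ℝ) (hε : 0 < ε) {α : Type*} [MeasurableSpace α] {μ : Measure α} (ψ : α → ℝ)
    (hi : Integrable ψ μ) (hi2 : Integrable (fun t => ψ t ^ 2) μ) :
    Integrable (fun t => posG ε (ψ t)) μ := by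
  refine Integrable.mono' (hi2.add (hi.abs.const_mul (2 * ε)))
    ((posG_cont ε).comp_aestronglyMeasurable hi.1) (Filter.Eventually.of_forall fun t => ?_)
  exact posG_abs ε (ψ t) hε

lemma rising (ε p : ℝ) (hε : 0 < ε) (hp : 0 ≤ p) (ψ : ℝ → ℝ)
    (hi : IntervalIntegrable ψ volume 0 p) (hi2 : IntervalIntegrable (fun t => ψ t ^ 2) volume 0 p)
    (hv : ∀ c d, 0 ≤ c → c < d → d ≤ p →
      intAvg (fun t => ψ t ^ 2) c d - (intAvg ψ c d) ^ 2 ≤ ε ^ 2)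
    (hΦ : ∀ t ∈ Icc 0 p, ∫ s in 0..p, (ψ s - ε) ≤ ∫ s in 0..t, (ψ s - ε)) :
    ∫ t in Ioo 0 p, posG ε (ψ t) ≤ 0 := by
  set Φ : ℝ → ℝ := fun t => ∫ s in 0..t, (ψ s - ε) with hΦdef
  have hie : IntervalIntegrable (fun s => ψ s - ε) volume 0 p := hi.sub (by simp)
  have hc : ContinuousOn Φ (Icc 0 p) := by
    have := intervalIntegral.continuousOn_primitive_interval' hie (left_mem_uIcc)
    rwa [uIcc_of_le hp] at this
  have hint : IntegrableOn (fun t => posG ε (ψ t)) (Ioo 0 p) := by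
    apply posG_int ε hε
    · exact ((intervalIntegrable_iff_integrableOn_Ioo_of_le hp).1 hi)
    · exact ((intervalIntegrable_iff_integrableOn_Ioo_of_le hp).1 hi2)
  let U : Set ℝ := {t | t ∈ Ioo 0 p ∧ ∃ y ∈ Ico 0 t, Φ y < Φ t}
  have hUs : U ⊆ Ioo 0 p := fun t ht => ht.1
  have hU : IsOpen U := by
    rw [isOpen_iff_mem_nhds]
    rintro t ⟨ht, y, hy, hlt⟩
    have hca : ContinuousAt Φ t := hc.continuousAt (Icc_mem_nhds ht.1 ht.2)
    filter_upwards [Ioo_mem_nhds ht.1 ht.2, hca.eventually (lt_mem_nhds hlt), lt_mem_nhds hy.2]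
      with z h1 h2 h3
    exact ⟨h1, y, ⟨hy.1, h3⟩, h2⟩
  have hnot : ∀ a, 0 ≤ a → a < p → a ∉ U → ∀ y ∈ Icc 0 a, Φ a ≤ Φ y := by
    intro a h0 h1 hn y hy
    by_contra hcon
    push Not at hcon
    have hya : y < a := lt_of_le_of_ne hy.2 (by rintro rfl; exact lt_irrefl _ hcon)
    exact hn ⟨⟨hy.1.trans_lt hya, h1⟩, y, ⟨hy.1, hya⟩, hcon⟩
  have hUint : ∫ t in U, posG ε (ψ t) ≤ 0 := by
    apply open_int_nonpos U hU (bddBelow_Ioo.mono hUs) (bddAbove_Ioo.mono hUs) _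
      (hint.mono_set hUs)
    intro a b hab hsub ha hb
    have hI : Icc a b ⊆ Icc 0 p := by
      have h1 : closure (Ioo a b) ⊆ closure (Ioo 0 p) := closure_mono (hsub.trans hUs)
      rw [closure_Ioo hab.ne] at h1
      exact h1.trans (closure_minimal Ioo_subset_Icc_self isClosed_Icc)
    have ha0 : 0 ≤ a := (hI (left_mem_Icc.2 hab.le)).1
    have hbp : b ≤ p := (hI (right_mem_Icc.2 hab.le)).2
    have hba : Φ b ≤ Φ a := by
      rcases eq_or_lt_of_le hbp with rfl | hlt
      · exact hΦ a ⟨ha0, hab.le⟩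
      · exact hnot b (ha0.trans hab.le) hlt hb a ⟨ha0, hab.le⟩
    have hmid : ∀ t ∈ Ioo a b, Φ a ≤ Φ t := by
      intro t ht
      have htp : Icc 0 t ⊆ Icc 0 p := Icc_subset_Icc_right (ht.2.le.trans hbp)
      obtain ⟨y, hy, hmin⟩ := isCompact_Icc.exists_isMinOn (nonempty_Icc.2 (ha0.trans ht.1.le))
        (hc.mono htp)
      have hya : y ≤ a := by
        by_contra hcon
        push Not at hcon
        obtain ⟨_, z, hz, hzl⟩ := hsub ⟨hcon, hy.2.trans_lt ht.2⟩
        have := hmin (show z ∈ Icc 0 t from ⟨hz.1, hz.2.le.trans hy.2⟩)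
        exact absurd hzl (not_lt.2 this)
      exact (hnot a ha0 (hab.trans_le hbp) ha y ⟨hy.1, hya⟩).trans
        (hmin (right_mem_Icc.2 (ha0.trans ht.1.le)))
    have hab' : Φ a ≤ Φ b := by
      have h1 : Filter.Tendsto Φ (nhdsWithin b (Ioo a b)) (nhds (Φ b)) :=
        ((hc b (hI (right_mem_Icc.2 hab.le))).mono (Ioo_subset_Icc_self.trans hI))
      have : (nhdsWithin b (Ioo a b)).NeBot := right_nhdsWithin_Ioo_neBot hab
      exact ge_of_tendsto h1 (eventually_mem_nhdsWithin.mono hmid)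
    have hzero : ∫ t in a..b, (ψ t - ε) = 0 := by
      have h1 : Φ b - Φ a = ∫ t in a..b, (ψ t - ε) :=
        intervalIntegral.integral_interval_sub_left
          (hie.mono_set (by rw [uIcc_of_le hp, uIcc_of_le (ha0.trans hab.le)]; exact Icc_subset_Icc_right hbp))
          (hie.mono_set (by rw [uIcc_of_le hp, uIcc_of_le ha0]; exact Icc_subset_Icc_right (hab.le.trans hbp)))
      linarith
    have hss : uIcc a b ⊆ uIcc 0 p := by rwa [uIcc_of_le hp, uIcc_of_le hab.le]
    have hblock := bmo_block ε ψ a b hab.le (hi.mono_set hss) (hi2.mono_set hss)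
      (fun h => hv a b ha0 h hbp) hzero
    rw [intervalIntegral.integral_of_le hab.le, integral_Ioc_eq_integral_Ioo] at hblock
    refine le_trans (integral_mono (hint.mono_set (hsub.trans hUs)) ?_ (fun t => posG_le ε (ψ t) hε)) hblock
    exact ((intervalIntegrable_iff_integrableOn_Ioo_of_le hab.le).1
      ((hi2.mono_set hss).sub ((hi.mono_set hss).const_mul _)))
  have hoff : ∫ t in Ioo 0 p \ U, posG ε (ψ t) ≤ 0 := by
    apply setIntegral_nonpos_ae (measurableSet_Ioo.diff hU.measurableSet)
    filter_upwards [hie.ae_hasDerivAt_integral] with t ht htm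
    have hd := ht (by rw [uIcc_of_le hp]; exact Ioo_subset_Icc_self htm.1) 0 left_mem_uIcc
    apply posG_nonpos ε _ hε
    have : ψ t - ε ≤ 0 := by
      have h2 := (hasDerivAt_iff_tendsto_slope_left_right.1 hd).1
      refine le_of_tendsto h2 ?_
      filter_upwards [Ioo_mem_nhdsLT htm.1.1] with y hy
      rw [slope_def_field]
      apply div_nonpos_of_nonneg_of_nonpos
      · exact sub_nonneg.2 (hnot t htm.1.1.le htm.1.2 htm.2 y ⟨hy.1.le, hy.2.le⟩)
      · linarith [hy.2]
    linarith
  have := integral_inter_add_sdiff (f := fun t => posG ε (ψ t)) (s := Ioo 0 p) hU.measurableSet hint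
  rw [inter_eq_right.2 hUs] at this
  linarith

lemma key (ε : ℝ) (hε : 0 < ε) (ψ : ℝ → ℝ)
    (hb : memBMOe ε 0 1 ψ) (hm : ∫ t in 0..1, ψ t ≤ ε) :
    ∫ t in Ioo (0:ℝ) 1, posG ε (ψ t) ≤ 0 := by
  obtain ⟨h1, h2, hv⟩ := hb
  have hi : IntervalIntegrable ψ volume 0 1 :=
    (intervalIntegrable_iff_integrableOn_Ioo_of_le zero_le_one).2 h1
  have hi2 : IntervalIntegrable (fun t => ψ t ^ 2) volume 0 1 :=
    (intervalIntegrable_iff_integrableOn_Ioo_of_le zero_le_one).2 h2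
  have hie : IntervalIntegrable (fun s => ψ s - ε) volume 0 1 := hi.sub (by simp)
  set Φ : ℝ → ℝ := fun t => ∫ s in 0..t, (ψ s - ε) with hΦdef
  have hc : ContinuousOn Φ (Icc 0 1) := by
    have := intervalIntegral.continuousOn_primitive_interval' hie (left_mem_uIcc)
    rwa [uIcc_of_le zero_le_one] at this
  have hΦ0 : Φ 0 = 0 := by simp [hΦdef]
  have hΦ1 : Φ 1 ≤ 0 := by
    simp only [hΦdef]
    rw [intervalIntegral.integral_sub hi (by simp)]
    simpa using hm
  have hcomp : IsCompact (Icc (0:ℝ) 1 ∩ Φ ⁻¹' {Φ 1}) :=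
    isCompact_Icc.of_isClosed_subset (hc.preimage_isClosed_of_isClosed isClosed_Icc isClosed_singleton)
      inter_subset_left
  obtain ⟨p, ⟨hpI, hp1⟩, hpl⟩ := hcomp.exists_isLeast ⟨1, ⟨by simp, rfl⟩⟩
  have hp1 : Φ p = Φ 1 := hp1
  have hge : ∀ t ∈ Icc 0 p, Φ p ≤ Φ t := by
    intro t ht
    by_contra hcon
    push Not at hcon
    have htp : t < p := lt_of_le_of_ne ht.2 (by rintro rfl; exact lt_irrefl _ hcon)
    have := intermediate_value_Icc' ht.1 (hc.mono (Icc_subset_Icc_right (ht.2.trans hpI.2)))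
    obtain ⟨z, hz, hzp⟩ := this ⟨hcon.le, by rw [hp1, hΦ0]; exact hΦ1⟩
    have := hpl ⟨⟨hz.1, hz.2.trans (ht.2.trans hpI.2)⟩, (hzp.trans hp1 : Φ z = Φ 1)⟩
    linarith [hz.2]
  have hs1 : uIcc 0 p ⊆ uIcc (0:ℝ) 1 := by
    rw [uIcc_of_le hpI.1, uIcc_of_le zero_le_one]; exact Icc_subset_Icc_right hpI.2
  have hs2 : uIcc p 1 ⊆ uIcc (0:ℝ) 1 := by
    rw [uIcc_of_le hpI.2, uIcc_of_le zero_le_one]; exact Icc_subset_Icc_left hpI.1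
  have hA := rising ε p hε hpI.1 ψ (hi.mono_set hs1) (hi2.mono_set hs1)
    (fun c d a b e => hv c d a b (e.trans hpI.2)) hge
  have hzero : ∫ t in p..1, (ψ t - ε) = 0 := by
    have h1 : Φ 1 - Φ p = ∫ t in p..1, (ψ t - ε) :=
      intervalIntegral.integral_interval_sub_left hie (hie.mono_set hs1)
    linarith
  have hB := bmo_block ε ψ p 1 hpI.2 (hi.mono_set hs2) (hi2.mono_set hs2)
      (fun h => hv p 1 hpI.1 h le_rfl) hzero
  have hint : IntervalIntegrable (fun t => posG ε (ψ t)) volume 0 1 :=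
    (intervalIntegrable_iff_integrableOn_Ioo_of_le zero_le_one).2 (posG_int ε hε ψ h1 h2)
  have hC : ∫ t in p..1, posG ε (ψ t) ≤ ∫ t in p..1, (ψ t ^ 2 - 2 * ε * ψ t) :=
    intervalIntegral.integral_mono hpI.2 (hint.mono_set hs2)
      ((hi2.mono_set hs2).sub ((hi.mono_set hs2).const_mul _)) (fun t => posG_le ε (ψ t) hε)
  have hD := intervalIntegral.integral_add_adjacent_intervals (hint.mono_set hs1) (hint.mono_set hs2)
  rw [← integral_Ioc_eq_integral_Ioo, ← intervalIntegral.integral_of_le hpI.1] at hA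
  rw [← integral_Ioc_eq_integral_Ioo, ← intervalIntegral.integral_of_le zero_le_one]
  linarith

lemma w_int (ε ε₀ : ℝ) (hε : 0 < ε) (hεε₀ : ε < ε₀) (g : ℝ → ℝ)
    (hg : Integrable (fun t => g t * Real.exp (-|t| / ε₀))) (u : ℝ) :
    IntegrableOn (fun t => g t * Real.exp (t / ε)) (Iic u) := by
  have h0 : 0 < ε₀ := hε.trans hεε₀
  have h1 : IntegrableOn (fun t => Real.exp (t / ε + |t| / ε₀) * (g t * Real.exp (-|t| / ε₀)))
      (Iic u) := by
    refine Integrable.bdd_mul (c := Real.exp (|u| / ε + |u| / ε₀)) hg.integrableOn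
      (Continuous.aestronglyMeasurable (by fun_prop)) ?_
    filter_upwards [ae_restrict_mem measurableSet_Iic] with t ht
    rw [Real.norm_eq_abs, Real.abs_exp, Real.exp_le_exp]
    have ht : t ≤ u := ht
    rcases le_total t 0 with h | h
    · rw [abs_of_nonpos h]
      have : t / ε ≤ t / ε₀ := by
        rw [div_le_div_iff₀ hε h0]; nlinarith
      rw [neg_div]
      have : 0 ≤ |u| / ε + |u| / ε₀ := by positivity
      linarith
    · have : t ≤ |u| := ht.trans (le_abs_self u)
      rw [abs_of_nonneg h]
      gcongr
  refine h1.congr_fun (fun t _ => ?_) measurableSet_Iic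
  show Real.exp (t / ε + |t| / ε₀) * (g t * Real.exp (-|t| / ε₀)) = g t * Real.exp (t / ε)
  rw [mul_left_comm, ← Real.exp_add]
  congr 2; ring

lemma hasDerivAt_expdiv (ε t : ℝ) : HasDerivAt (fun t => Real.exp (t / ε))
    (ε⁻¹ * Real.exp (t / ε)) t := by
  have := ((hasDerivAt_id t).div_const ε).exp
  simpa [mul_comm] using this

lemma bp (ε : ℝ) (g g' : ℝ → ℝ) (u : ℝ) (hd : ∀ t, HasDerivAt g (g' t) t)
    (h1 : IntegrableOn (fun t => g t * Real.exp (t / ε)) (Iic u))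
    (h2 : IntegrableOn (fun t => g' t * Real.exp (t / ε)) (Iic u)) :
    ∫ t in Iic u, g' t * Real.exp (t / ε)
      = g u * Real.exp (u / ε) - ε⁻¹ * ∫ t in Iic u, g t * Real.exp (t / ε) := by
  have hD : ∀ t ∈ Iic u, HasDerivAt (fun t => g t * Real.exp (t / ε))
      (g' t * Real.exp (t / ε) + ε⁻¹ * (g t * Real.exp (t / ε))) t := by
    intro t _
    have := (hd t).mul (hasDerivAt_expdiv ε t)
    exact this.congr_deriv (by ring)
  have hI : IntegrableOn (fun t => g' t * Real.exp (t / ε) + ε⁻¹ * (g t * Real.exp (t / ε))) (Iic u) :=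
    h2.add (h1.const_mul _)
  have hz := tendsto_zero_of_hasDerivAt_of_integrableOn_Iic hD hI h1
  have := integral_Iic_of_hasDerivAt_of_tendsto' hD hI hz
  rw [integral_add h2 (h1.const_mul _), integral_const_mul] at this
  linarith

lemma bp3 (ε : ℝ) (g g' : ℝ → ℝ) (u : ℝ) (hgc : Continuous g)
    (hloc : ∀ x y, IntervalIntegrable g' volume x y)
    (hd : ∀ x y : ℝ, x ≤ y → g y - g x = ∫ t in x..y, g' t)
    (h1 : IntegrableOn (fun t => g t * Real.exp (t / ε)) (Iic u))
    (h2 : IntegrableOn (fun t => g' t * Real.exp (t / ε)) (Iic u)) :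
    ∫ t in Iic u, g' t * Real.exp (t / ε)
      = g u * Real.exp (u / ε) - ε⁻¹ * ∫ t in Iic u, g t * Real.exp (t / ε) := by
  have hee : ∀ x y, ∫ s in x..y, ε⁻¹ * Real.exp (s / ε) = Real.exp (y / ε) - Real.exp (x / ε) := by
    intro x y
    apply intervalIntegral.integral_eq_sub_of_hasDerivAt (fun t _ => hasDerivAt_expdiv ε t)
    exact Continuous.intervalIntegrable (by fun_prop) _ _
  have hfin : ∀ x, x ≤ u → g x * Real.exp (x / ε) = g u * Real.exp (u / ε)
      - ε⁻¹ * (∫ t in x..u, g t * Real.exp (t / ε)) - ∫ t in x..u, g' t * Real.exp (t / ε) := by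
    intro x hx
    have hP := (hloc x u).absolutelyContinuousOnInterval_intervalIntegral (c := x) (by simp)
    have hE := (Continuous.intervalIntegrable (show Continuous fun s => ε⁻¹ * Real.exp (s / ε) by fun_prop)
      x u).absolutelyContinuousOnInterval_intervalIntegral (c := x) (by simp)
    have key := hP.integral_deriv_mul_eq_sub hE
    have hcong : ∫ y in x..u, (deriv (fun y => ∫ v in x..y, g' v) y * (∫ v in x..y, ε⁻¹ * Real.exp (v / ε))
        + (∫ v in x..y, g' v) * deriv (fun y => ∫ v in x..y, ε⁻¹ * Real.exp (v / ε)) y)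
        = ∫ y in x..u, ((g' y * Real.exp (y / ε) - Real.exp (x / ε) * g' y)
          + ε⁻¹ * (g y * Real.exp (y / ε)) - g x * (ε⁻¹ * Real.exp (y / ε))) := by
      apply intervalIntegral.integral_congr_ae
      filter_upwards [(hloc x u).ae_hasDerivAt_integral] with y hy hyI
      rw [uIoc_of_le hx] at hyI
      have h3 := (hy (by rw [uIcc_of_le hx]; exact Ioc_subset_Icc_self hyI) x (by simp)).deriv
      rw [h3, ← hd x y hyI.1.le]
      have h4 : (fun y => ∫ v in x..y, ε⁻¹ * Real.exp (v / ε)) = fun y => Real.exp (y / ε) - Real.exp (x / ε) := by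
        funext y; exact hee x y
      rw [h4, hee, ((hasDerivAt_expdiv ε y).sub_const _).deriv]
      ring
    have i1 : IntervalIntegrable (fun t => g' t * Real.exp (t / ε)) volume x u :=
      (hloc x u).mul_continuousOn (by fun_prop)
    have i2 : IntervalIntegrable (fun t => Real.exp (x / ε) * g' t) volume x u := (hloc x u).const_mul _
    have i3 : IntervalIntegrable (fun t => ε⁻¹ * (g t * Real.exp (t / ε))) volume x u :=
      Continuous.intervalIntegrable (by fun_prop) _ _
    have i4 : IntervalIntegrable (fun t => g x * (ε⁻¹ * Real.exp (t / ε))) volume x u :=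
      Continuous.intervalIntegrable (by fun_prop) _ _
    rw [hcong, intervalIntegral.integral_sub ((i1.sub i2).add i3) i4,
      intervalIntegral.integral_add (i1.sub i2) i3, intervalIntegral.integral_sub i1 i2,
      intervalIntegral.integral_const_mul, intervalIntegral.integral_const_mul,
      intervalIntegral.integral_const_mul, hee, ← hd x u hx, hee] at key
    simp only [intervalIntegral.integral_same] at key
    linarith
  have hT : Filter.Tendsto (fun x => g x * Real.exp (x / ε)) Filter.atBot (nhds
      (g u * Real.exp (u / ε)
      - ε⁻¹ * (∫ t in Iic u, g t * Real.exp (t / ε)) - ∫ t in Iic u, g' t * Real.exp (t / ε))) := by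
    have a1 := intervalIntegral_tendsto_integral_Iic u h1 Filter.tendsto_id
    have a2 := intervalIntegral_tendsto_integral_Iic u h2 Filter.tendsto_id
    refine Filter.Tendsto.congr' ?_ (((a1.const_mul ε⁻¹).const_sub (g u * Real.exp (u / ε))).sub a2)
    filter_upwards [Filter.eventually_le_atBot u] with x hx
    exact (hfin x hx).symm
  have hz := IntegrableAtFilter.eq_zero_of_tendsto (μ := volume) ⟨Iic u, Filter.Iic_mem_atBot u, h1⟩ (by
    intro s hs
    obtain ⟨b, hb⟩ := Filter.mem_atBot_sets.1 hs
    have : Iic b ⊆ s := fun x hx => hb x hx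
    exact measure_mono_top this (by simp)) hT
  linarith

lemma der_Iic (g : ℝ → ℝ) (hg : Continuous g) (hi : ∀ u, IntegrableOn g (Iic u)) (u : ℝ) :
    HasDerivAt (fun u => ∫ t in Iic u, g t) (g u) u := by
  have h : (fun u => ∫ t in Iic u, g t) = fun u => (∫ t in Iic 0, g t) + ∫ t in (0:ℝ)..u, g t := by
    funext v
    rw [← intervalIntegral.integral_Iic_sub_Iic (hi 0) (hi v)]; ring
  rw [h]
  exact (hg.integral_hasStrictDerivAt 0 u).hasDerivAt.const_add _

lemma struct (ε ε₀ : ℝ) (hε : 0 < ε) (hεε₀ : ε < ε₀) (f f3 : ℝ → ℝ)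
    (hf : memWcl ε₀ f f3)
    (hneg : ∀ u : ℝ, (∫ t in Iic u, f3 t * Real.exp (t / ε)) ≤ 0) :
    ∃ m1 m2 : ℝ → ℝ, Continuous m2 ∧ (∀ u, m2 u ≤ 0) ∧ (∀ u, HasDerivAt m1 (m2 u) u) ∧
      (∀ u, deriv (deriv f) u = m1 u + ε * m2 u) ∧
      (∀ u, deriv f u = ε⁻¹ * Real.exp (-u / ε) * (∫ t in Iic u, deriv f t * Real.exp (t / ε))
        + ε * m1 u) := by
  obtain ⟨hC, hAC, w0, w1, w2, w3⟩ := hf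
  have hC1 : ContDiff ℝ 1 (deriv f) := ((contDiff_succ_iff_deriv (n := 1)).1 hC).2.2
  have hd1 : ∀ t, HasDerivAt (deriv f) (deriv (deriv f) t) t :=
    fun t => (hC1.differentiable one_ne_zero t).hasDerivAt
  have hc2 : Continuous (deriv (deriv f)) := hC1.continuous_deriv le_rfl
  have j1 := w_int ε ε₀ hε hεε₀ _ w1
  have j2 := w_int ε ε₀ hε hεε₀ _ w2
  have j3 := w_int ε ε₀ hε hεε₀ _ w3
  have hloc : ∀ x y, IntervalIntegrable f3 volume x y := by
    intro x y
    have : IntervalIntegrable (fun t => (f3 t * Real.exp (-|t| / ε₀)) * Real.exp (|t| / ε₀)) volume x y :=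
      w3.intervalIntegrable.mul_continuousOn (by fun_prop)
    convert this using 2 with t
    rw [mul_assoc, ← Real.exp_add]; simp [neg_div]
  have b1 := fun u => bp ε _ _ u hd1 (j1 u) (j2 u)
  have b2 := fun u => bp3 ε _ f3 u hc2 hloc hAC (j2 u) (j3 u)
  have hexp : ∀ u, Real.exp (-u / ε) * Real.exp (u / ε) = 1 := by
    intro u; rw [← Real.exp_add]; simp [neg_div]
  refine ⟨fun u => ε⁻¹ * Real.exp (-u / ε) * ∫ t in Iic u, deriv (deriv f) t * Real.exp (t / ε),
    fun u => ε⁻¹ * Real.exp (-u / ε) * ∫ t in Iic u, f3 t * Real.exp (t / ε), ?_⟩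
  have hA : ∀ u, deriv (deriv f) u = ε⁻¹ * Real.exp (-u / ε) * (∫ t in Iic u, deriv (deriv f) t * Real.exp (t / ε))
      + ε * (ε⁻¹ * Real.exp (-u / ε) * ∫ t in Iic u, f3 t * Real.exp (t / ε)) := by
    intro u
    rw [b2 u]
    linear_combination (ε⁻¹ * Real.exp (-u / ε) * (∫ t in Iic u, deriv (deriv f) t * Real.exp (t / ε))
      - deriv (deriv f) u * Real.exp (-u / ε) * Real.exp (u / ε)) * (mul_inv_cancel₀ hε.ne') - deriv (deriv f) u * hexp u
  have hD : ∀ u, HasDerivAt (fun u => ε⁻¹ * Real.exp (-u / ε) * ∫ t in Iic u, deriv (deriv f) t * Real.exp (t / ε))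
      (ε⁻¹ * Real.exp (-u / ε) * ∫ t in Iic u, f3 t * Real.exp (t / ε)) u := by
    intro u
    have e1 : HasDerivAt (fun u => Real.exp (-u / ε)) (-ε⁻¹ * Real.exp (-u / ε)) u := by
      have := ((hasDerivAt_id u).neg.div_const ε).exp
      simpa [mul_comm, neg_div] using this
    have e2 := der_Iic (fun t => deriv (deriv f) t * Real.exp (t / ε)) (by fun_prop) j2 u
    have e3 := (e1.const_mul ε⁻¹).mul e2
    refine e3.congr_deriv ?_
    rw [b2 u]
    ring
  refine ⟨?_, ?_, hD, hA, ?_⟩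
  · have : (fun u => ε⁻¹ * Real.exp (-u / ε) * ∫ t in Iic u, f3 t * Real.exp (t / ε)) =
      fun u => ε⁻¹ * (deriv (deriv f) u - ε⁻¹ * Real.exp (-u / ε) * (∫ t in Iic u, deriv (deriv f) t * Real.exp (t / ε))) := by
      funext u
      rw [hA u]
      field_simp
      ring
    rw [this]
    have : Continuous (fun u => ε⁻¹ * Real.exp (-u / ε) * (∫ t in Iic u, deriv (deriv f) t * Real.exp (t / ε))) :=
      continuous_iff_continuousAt.2 fun u => (hD u).continuousAt
    fun_prop
  · intro u
    exact mul_nonpos_of_nonneg_of_nonpos (by positivity) (hneg u)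
  · intro u
    simp only
    rw [b1 u]
    linear_combination (ε⁻¹ * Real.exp (-u / ε) * (∫ t in Iic u, deriv f t * Real.exp (t / ε))
      - deriv f u * Real.exp (-u / ε) * Real.exp (u / ε)) * (mul_inv_cancel₀ hε.ne') - deriv f u * hexp u

lemma bmo_refl (ε s : ℝ) (φ : ℝ → ℝ) (hb : memBMOe ε 0 1 φ) : memBMOe ε 0 1 (fun t => s - φ t) := by
  obtain ⟨h1, h2, hv⟩ := hb
  have hc : ∀ c : ℝ, IntegrableOn (fun _ : ℝ => c) (Ioo 0 1) := fun c => by simp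
  have hexp : (fun t => (s - φ t) ^ 2) = fun t => (s ^ 2 - 2 * s * φ t) + φ t ^ 2 := by
    funext t; ring
  refine ⟨(hc s).sub h1, ?_, ?_⟩
  · rw [hexp]
    exact ((hc (s ^ 2)).sub (h1.const_mul (2 * s))).add h2
  · intro c d h0 hcd hd
    have hss : uIcc c d ⊆ uIcc (0:ℝ) 1 := by
      rw [uIcc_of_le hcd.le, uIcc_of_le zero_le_one]; exact Icc_subset_Icc h0 hd
    have i1 : IntervalIntegrable φ volume c d :=
      ((intervalIntegrable_iff_integrableOn_Ioo_of_le zero_le_one).2 h1).mono_set hss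
    have i2 : IntervalIntegrable (fun t => φ t ^ 2) volume c d :=
      ((intervalIntegrable_iff_integrableOn_Ioo_of_le zero_le_one).2 h2).mono_set hss
    refine le_trans (le_of_eq ?_) (hv c d h0 hcd hd)
    unfold intAvg
    rw [hexp, intervalIntegral.integral_add ((by simp : IntervalIntegrable (fun _ => s ^ 2) volume c d).sub (i1.const_mul _)) i2,
      intervalIntegral.integral_sub (by simp) (i1.const_mul _),
      intervalIntegral.integral_sub (by simp) i1,
      intervalIntegral.integral_const_mul, intervalIntegral.integral_const,
      intervalIntegral.integral_const, smul_eq_mul, smul_eq_mul]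
    have : d - c ≠ 0 := by linarith
    field_simp
    ring

lemma upper_fubini (ε : ℝ) (hε : 0 < ε) (m2 : ℝ → ℝ) (hm2c : Continuous m2) (hm2 : ∀ s, m2 s ≤ 0)
    (φ : ℝ → ℝ) (hb : memBMOe ε 0 1 φ) (L u : ℝ) (hL : L ≤ u) (hu : u - ε ≤ ∫ t in 0..1, φ t) :
    IntegrableOn (fun τ => ∫ s in L..u, m2 s * (posG ε (s - φ τ) / 2)) (Ioo 0 1) ∧
    0 ≤ ∫ τ in Ioo (0:ℝ) 1, ∫ s in L..u, m2 s * (posG ε (s - φ τ) / 2) := by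
  have hφ := hb.1
  have hφ2 := hb.2.1
  have hI : Integrable (Function.uncurry fun s τ => m2 s * (posG ε (s - φ τ) / 2))
      ((volume.restrict (Ioc L u)).prod (volume.restrict (Ioo (0:ℝ) 1))) := by
    have b1 : Integrable (fun s => |m2 s| * (2 * s ^ 2 + 2 * ε * |s| + 1)) (volume.restrict (Ioc L u)) :=
      (Continuous.integrableOn_Ioc (by fun_prop))
    have b2 : Integrable (fun τ => 1 + 2 * φ τ ^ 2 + 2 * ε * |φ τ|) (volume.restrict (Ioo (0:ℝ) 1)) :=
      ((integrable_const 1).add (hφ2.const_mul 2)).add (hφ.abs.const_mul (2 * ε))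
    refine (b1.mul_prod b2).mono' ?_ ?_
    · have h1 : AEStronglyMeasurable (fun z : ℝ × ℝ => φ z.2)
          ((volume.restrict (Ioc L u)).prod (volume.restrict (Ioo (0:ℝ) 1))) :=
        hφ.1.comp_snd
      have h2 : AEStronglyMeasurable (fun z : ℝ × ℝ => posG ε (z.1 - φ z.2) / 2)
          ((volume.restrict (Ioc L u)).prod (volume.restrict (Ioo (0:ℝ) 1))) :=
        ((posG_cont ε).div_const 2).comp_aestronglyMeasurable
          ((continuous_fst.aestronglyMeasurable).sub h1)
      exact ((hm2c.comp continuous_fst).aestronglyMeasurable).mul h2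
    · refine Filter.Eventually.of_forall fun z => ?_
      obtain ⟨s, τ⟩ := z
      simp only [Function.uncurry]
      rw [Real.norm_eq_abs, abs_mul, mul_assoc]
      refine mul_le_mul_of_nonneg_left ?_ (abs_nonneg _)
      have h1 := posG_abs ε (s - φ τ) hε
      have h2 : |s - φ τ| ≤ |s| + |φ τ| := abs_sub _ _
      have h3 : (s - φ τ) ^ 2 ≤ 2 * s ^ 2 + 2 * φ τ ^ 2 := by nlinarith [sq_nonneg (s + φ τ)]
      have h4 : ε * |s - φ τ| ≤ ε * (|s| + |φ τ|) := mul_le_mul_of_nonneg_left h2 hε.le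
      rw [abs_div, abs_two]
      have h5 : 0 ≤ (2 * s ^ 2 + 2 * ε * |s|) * (2 * φ τ ^ 2 + 2 * ε * |φ τ|) := by positivity
      have h6 := abs_nonneg (posG ε (s - φ τ))
      nlinarith
  have heq : (fun τ => ∫ s in L..u, m2 s * (posG ε (s - φ τ) / 2))
      = fun τ => ∫ s in Ioc L u, m2 s * (posG ε (s - φ τ) / 2) := by
    funext τ; rw [intervalIntegral.integral_of_le hL]
  rw [heq]
  refine ⟨hI.integral_prod_right, ?_⟩
  rw [← integral_integral_swap hI]
  apply setIntegral_nonneg measurableSet_Ioc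
  intro s hs
  rw [integral_const_mul, integral_div]
  apply mul_nonneg_of_nonpos_of_nonpos (hm2 s)
  have := key ε hε (fun t => s - φ t) (bmo_refl ε s φ hb) (by
    rw [intervalIntegral.integral_sub (by simp)
      ((intervalIntegrable_iff_integrableOn_Ioo_of_le zero_le_one).2 hφ)]
    simp only [intervalIntegral.integral_const, sub_zero, smul_eq_mul, one_mul]
    linarith [hs.2])
  linarith

lemma q_ident (ε : ℝ) (f m1 m2 : ℝ → ℝ) (hC : ContDiff ℝ 2 f) (hm2c : Continuous m2)
    (hm1 : ∀ u, HasDerivAt m1 (m2 u) u) (hf2 : ∀ u, deriv (deriv f) u = m1 u + ε * m2 u)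
    (a b t : ℝ) :
    (f b + deriv f b * (t - b) + m1 b * (t - b) ^ 2 / 2)
      - (f a + deriv f a * (t - a) + m1 a * (t - a) ^ 2 / 2)
     = ∫ s in a..b, m2 s * (((s - t) ^ 2 - 2 * ε * (s - t)) / 2) := by
  have hC1 : ContDiff ℝ 1 (deriv f) := ((contDiff_succ_iff_deriv (n := 1)).1 hC).2.2
  have hd1 : ∀ t, HasDerivAt (deriv f) (deriv (deriv f) t) t :=
    fun t => (hC1.differentiable one_ne_zero t).hasDerivAt
  have hd0 : ∀ t, HasDerivAt f (deriv f t) t :=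
    fun t => (hC.differentiable two_ne_zero t).hasDerivAt
  symm
  apply intervalIntegral.integral_eq_sub_of_hasDerivAt
    (f := fun s => f s + deriv f s * (t - s) + m1 s * (t - s) ^ 2 / 2)
  · intro s _
    have e : HasDerivAt (fun s => t - s) (-1) s := by
      simpa using (hasDerivAt_id s).const_sub t
    have := ((hd0 s).add ((hd1 s).mul e)).add (((hm1 s).mul (e.pow 2)).div_const 2)
    refine this.congr_deriv ?_
    rw [hf2]
    norm_num
    ring
  · exact Continuous.intervalIntegrable (by fun_prop) _ _

lemma upper (ε : ℝ) (hε : 0 < ε) (f m1 m2 : ℝ → ℝ) (hC : ContDiff ℝ 2 f)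
    (hm2c : Continuous m2) (hm2 : ∀ s, m2 s ≤ 0)
    (hm1 : ∀ u, HasDerivAt m1 (m2 u) u) (hf2 : ∀ u, deriv (deriv f) u = m1 u + ε * m2 u)
    (φ : ℝ → ℝ) (hb : memBMOe ε 0 1 φ) (hfi : IntegrableOn (fun t => f (φ t)) (Ioo 0 1))
    (u : ℝ) (hu : u - ε ≤ ∫ t in 0..1, φ t) :
    ∫ τ in Ioo (0:ℝ) 1, f (φ τ) ≤
      f u + deriv f u * ((∫ t in Ioo (0:ℝ) 1, φ t) - u) + m1 u / 2 *
        ((∫ t in Ioo (0:ℝ) 1, φ t ^ 2) - 2 * u * (∫ t in Ioo (0:ℝ) 1, φ t) + u ^ 2) := by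
  have hφ := hb.1
  have hφ2 := hb.2.1
  have hc : ∀ c : ℝ, IntegrableOn (fun _ : ℝ => c) (Ioo 0 1) := fun c => by simp
  set q : ℝ → ℝ → ℝ := fun b t => f b + deriv f b * (t - b) + m1 b * (t - b) ^ 2 / 2 with hq
  have hid := q_ident ε f m1 m2 hC hm2c hm1 hf2
  have hqt : ∀ t, q t t = f t := fun t => by simp [hq]
  have hqe : ∀ t, q u t = ((f u - deriv f u * u + m1 u / 2 * u ^ 2) + (deriv f u - m1 u * u) * t)
      + m1 u / 2 * t ^ 2 := fun t => by simp only [hq]; ring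
  have hqi : IntegrableOn (fun τ => q u (φ τ)) (Ioo 0 1) := by
    simp only [hqe]
    exact ((hc _).add (hφ.const_mul _)).add (hφ2.const_mul _)
  have hqint : ∫ τ in Ioo (0:ℝ) 1, q u (φ τ) = f u + deriv f u * ((∫ t in Ioo (0:ℝ) 1, φ t) - u) + m1 u / 2 *
        ((∫ t in Ioo (0:ℝ) 1, φ t ^ 2) - 2 * u * (∫ t in Ioo (0:ℝ) 1, φ t) + u ^ 2) := by
    simp only [hqe]
    have iA : IntegrableOn (fun τ => (f u - deriv f u * u + m1 u / 2 * u ^ 2) + (deriv f u - m1 u * u) * φ τ)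
      (Ioo 0 1) := (hc _).add (hφ.const_mul _)
    rw [integral_add iA (hφ2.const_mul _),
      integral_add (hc _) (hφ.const_mul _), integral_const_mul, integral_const_mul]
    simp
    ring
  rw [← hqint]
  -- kernel facts
  have kint : ∀ a b t, IntervalIntegrable (fun s => m2 s * (posG ε (s - t) / 2)) volume a b := by
    intro a b t
    have := posG_cont ε
    exact Continuous.intervalIntegrable (by fun_prop) _ _
  have K1 : ∀ a b t, a ≤ b → t ≤ a →
      ∫ s in a..b, m2 s * (posG ε (s - t) / 2) = q b t - q a t := by
    intro a b t hab hta
    rw [hq, hid a b t]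
    apply intervalIntegral.integral_congr
    intro s hs
    rw [uIcc_of_le hab] at hs
    simp only [posG]
    rw [max_eq_left (by linarith [hs.1])]
  have K2 : ∀ a b t, a ≤ b → b ≤ t → ∫ s in a..b, m2 s * (posG ε (s - t) / 2) = 0 := by
    intro a b t hab hta
    have : ∫ s in a..b, m2 s * (posG ε (s - t) / 2) = ∫ s in a..b, (0:ℝ) := by
      apply intervalIntegral.integral_congr
      intro s hs
      rw [uIcc_of_le hab] at hs
      simp only [posG]
      rw [max_eq_right (by linarith [hs.2])]
      simp
    rw [this]; simp
  set H : ℝ → ℝ := fun τ => f (φ τ) - q u (φ τ) with hH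
  have hHi : IntegrableOn H (Ioo 0 1) := hfi.sub hqi
  suffices hs : ∫ τ in Ioo (0:ℝ) 1, H τ ≤ 0 by
    rw [hH, integral_sub hfi hqi] at hs
    linarith
  let G : ℕ → ℝ → ℝ := fun n τ => if φ τ < u - n then min (H τ) 0 else H τ
  have hGabs : ∀ n τ, ‖G n τ‖ ≤ ‖H τ‖ := by
    intro n τ
    simp only [G]
    split_ifs
    · rcases le_total (H τ) 0 with h | h
      · rw [min_eq_left h]
      · rw [min_eq_right h]; simp
    · exact le_rfl
  have hGm : ∀ n, AEStronglyMeasurable (G n) (volume.restrict (Ioo 0 1)) := by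
    intro n
    have hF : Measurable (fun z : ℝ × ℝ => if z.1 < u - n then min z.2 0 else z.2) :=
      Measurable.ite (measurableSet_lt measurable_fst measurable_const) (by fun_prop) (by fun_prop)
    exact (hF.comp_aemeasurable (hφ.1.aemeasurable.prodMk hHi.1.aemeasurable)).aestronglyMeasurable
  have hGi : ∀ n, IntegrableOn (G n) (Ioo 0 1) := fun n =>
    hHi.norm.mono' (hGm n) (Filter.Eventually.of_forall (hGabs n))
  have hlim : Filter.Tendsto (fun n => ∫ τ in Ioo (0:ℝ) 1, G n τ) Filter.atTop
      (nhds (∫ τ in Ioo (0:ℝ) 1, H τ)) := by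
    apply tendsto_integral_of_dominated_convergence (fun τ => ‖H τ‖) hGm hHi.norm
    · exact fun n => Filter.Eventually.of_forall (hGabs n)
    · refine Filter.Eventually.of_forall fun τ => ?_
      apply tendsto_const_nhds.congr'
      obtain ⟨N, hN⟩ := exists_nat_gt (u - φ τ)
      filter_upwards [Filter.eventually_ge_atTop N] with n hn
      have : (N : ℝ) ≤ n := by exact_mod_cast hn
      simp only [G]
      rw [if_neg (by linarith)]
  refine le_of_tendsto hlim (Filter.Eventually.of_forall fun n => ?_)
  have hL : u - (n : ℝ) ≤ u := by linarith [Nat.cast_nonneg (α := ℝ) n]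
  obtain ⟨hKi, hK0⟩ := upper_fubini ε hε m2 hm2c hm2 φ hb (u - n) u hL hu
  have hmono : ∫ τ in Ioo (0:ℝ) 1, G n τ ≤
      ∫ τ in Ioo (0:ℝ) 1, -∫ s in (u - n)..u, m2 s * (posG ε (s - φ τ) / 2) := by
    apply integral_mono (hGi n) hKi.neg
    intro τ
    simp only [G, hH, Pi.neg_apply]
    generalize φ τ = t
    generalize (u - (n:ℝ)) = L at hL
    split_ifs with h
    · rcases le_total (2 * ε) (L - t) with h2 | h2
      · refine (min_le_right _ _).trans ?_
        rw [neg_nonneg, intervalIntegral.integral_of_le hL]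
        apply setIntegral_nonpos measurableSet_Ioc
        intro s hs
        apply mul_nonpos_of_nonpos_of_nonneg (hm2 s)
        simp only [posG]
        rw [max_eq_left (by linarith [hs.1])]
        have : 2 * ε ≤ s - t := by linarith [hs.1]
        nlinarith
      · refine (min_le_left _ _).trans ?_
        have e1 := K1 t u t (h.le.trans hL) le_rfl
        rw [hqt] at e1
        have e2 := intervalIntegral.integral_add_adjacent_intervals (kint t L t) (kint L u t)
        have e3 : 0 ≤ ∫ s in t..L, m2 s * (posG ε (s - t) / 2) := by
          apply intervalIntegral.integral_nonneg h.le
          intro s hs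
          apply mul_nonneg_of_nonpos_of_nonpos (hm2 s)
          have := posG_nonpos ε (s - t) hε (by linarith [hs.2])
          linarith
        linarith
    · push Not at h
      rcases le_total t u with h2 | h2
      · have e1 := K1 t u t h2 le_rfl
        rw [hqt] at e1
        have e2 := intervalIntegral.integral_add_adjacent_intervals (kint L t t) (kint t u t)
        have e3 := K2 L t t h le_rfl
        linarith
      · rw [K2 L u t hL h2, neg_zero]
        have e1 : q t t - q u t = _ := hid u t t
        rw [hqt] at e1
        rw [e1, intervalIntegral.integral_of_le h2]
        apply setIntegral_nonpos measurableSet_Ioc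
        intro s hs
        apply mul_nonpos_of_nonpos_of_nonneg (hm2 s)
        have : s - t ≤ 0 := by linarith [hs.2]
        nlinarith
  rw [integral_neg] at hmono
  linarith

lemma log_sq_int (c d : ℝ) (hc : 0 ≤ c) (hcd : c ≤ d) :
    IntervalIntegrable (fun t => log t ^ 2) volume c d ∧
    ∫ t in c..d, log t ^ 2 = (d * log d ^ 2 - 2 * (d * log d) + 2 * d)
      - (c * log c ^ 2 - 2 * (c * log c) + 2 * c) := by
  have hcont : ContinuousOn (fun t : ℝ => t * log t ^ 2 - 2 * (t * log t) + 2 * t) (Icc c d) := by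
    have h1 : ContinuousOn (fun t : ℝ => t * log t ^ 2) (Icc c d) := by
      have : Continuous (fun t : ℝ => 4 * (sqrt t * log (sqrt t)) ^ 2) :=
        continuous_const.mul ((Real.continuous_mul_log.comp Real.continuous_sqrt).pow 2)
      refine this.continuousOn.congr ?_
      intro t ht
      have ht0 : 0 ≤ t := hc.trans ht.1
      simp only []
      rw [Real.log_sqrt ht0, mul_pow, Real.sq_sqrt ht0]
      ring
    have h2 : Continuous (fun t : ℝ => 2 * (t * log t)) := continuous_const.mul Real.continuous_mul_log
    exact (h1.sub h2.continuousOn).add (by fun_prop)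
  have hder : ∀ t ∈ Ioo c d, HasDerivAt (fun t : ℝ => t * log t ^ 2 - 2 * (t * log t) + 2 * t) (log t ^ 2) t := by
    intro t ht
    have ht0 : t ≠ 0 := (lt_of_le_of_lt hc ht.1).ne'
    have hl := Real.hasDerivAt_log ht0
    have := (((hasDerivAt_id t).mul (hl.pow 2)).sub (((hasDerivAt_id t).mul hl).const_mul 2)).add
      ((hasDerivAt_id t).const_mul 2)
    refine this.congr_deriv ?_
    simp only [id]
    field_simp
    norm_num
    ring
  have hint : IntervalIntegrable (fun t => log t ^ 2) volume c d := by
    rw [intervalIntegrable_iff_integrableOn_Ioc_of_le hcd]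
    exact intervalIntegral.integrableOn_deriv_of_nonneg hcont hder (fun t _ => sq_nonneg _)
  exact ⟨hint, intervalIntegral.integral_eq_sub_of_hasDerivAt_of_le hcd hcont hder hint⟩

lemma g_var (ε κ c d : ℝ) (hc : 0 ≤ c) (hcd : c < d) :
    ∃ m, IntervalIntegrable (fun t => (ε * log t + κ - m) ^ 2) volume c d ∧
      ∫ t in c..d, (ε * log t + κ - m) ^ 2 ≤ ε ^ 2 * (d - c) := by
  obtain ⟨i2, e2⟩ := log_sq_int c d hc hcd.le
  have i1 : IntervalIntegrable log volume c d := intervalIntegral.intervalIntegrable_log'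
  have e1 : ∫ t in c..d, log t = d * log d - c * log c - d + c := integral_log
  have hdc : 0 < d - c := by linarith
  set A := d * log d with hA
  set C := c * log c with hC
  let μ := (A - C - d + c) / (d - c)
  have hμ : μ * (d - c) = A - C - d + c := by simp only [μ]; field_simp
  refine ⟨ε * μ + κ, ?_, ?_⟩
  · have : (fun t => (ε * log t + κ - (ε * μ + κ)) ^ 2)
      = fun t => (ε ^ 2 * log t ^ 2 + (-2 * ε ^ 2 * μ) * log t) + ε ^ 2 * μ ^ 2 := by funext t; ring
    rw [this]
    exact ((i2.const_mul _).add (i1.const_mul _)).add (by simp)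
  · have : (fun t => (ε * log t + κ - (ε * μ + κ)) ^ 2)
      = fun t => (ε ^ 2 * log t ^ 2 + (-2 * ε ^ 2 * μ) * log t) + ε ^ 2 * μ ^ 2 := by funext t; ring
    rw [this]
    have iA : IntervalIntegrable (fun t => ε ^ 2 * log t ^ 2 + (-2 * ε ^ 2 * μ) * log t) volume c d :=
      (i2.const_mul _).add (i1.const_mul _)
    rw [intervalIntegral.integral_add iA (by simp),
      intervalIntegral.integral_add (i2.const_mul _) (i1.const_mul _),
      intervalIntegral.integral_const_mul, intervalIntegral.integral_const_mul, e1, e2,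
      intervalIntegral.integral_const, smul_eq_mul, ← hμ]
    have key0 : ((d * log d ^ 2 - 2 * A + 2 * d) - (c * log c ^ 2 - 2 * C + 2 * c)) - μ ^ 2 * (d - c)
        ≤ d - c := by
      have h1 : μ ^ 2 * (d - c) * (d - c) = (A - C - d + c) ^ 2 := by rw [← hμ]; ring
      have h2 : 0 ≤ c * d * (log d - log c) ^ 2 := by
        have := hc.trans hcd.le
        positivity
      by_contra hh
      push Not at hh
      have h3 := mul_lt_mul_of_pos_right hh hdc
      rw [hA, hC] at h1 h3
      nlinarith [h1, h2, h3]
    have := mul_le_mul_of_nonneg_left key0 (sq_nonneg ε)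
    nlinarith

lemma var_le (φ : ℝ → ℝ) (c d M V : ℝ) (hcd : c < d)
    (i1 : IntervalIntegrable φ volume c d) (i2 : IntervalIntegrable (fun t => φ t ^ 2) volume c d)
    (h : ∫ t in c..d, (φ t - M) ^ 2 ≤ V * (d - c)) :
    intAvg (fun t => φ t ^ 2) c d - intAvg φ c d ^ 2 ≤ V := by
  have hdc : 0 < d - c := by linarith
  have : (fun t => (φ t - M) ^ 2) = fun t => (φ t ^ 2 + (-2 * M) * φ t) + M ^ 2 := by funext t; ring
  have iA : IntervalIntegrable (fun t => φ t ^ 2 + (-2 * M) * φ t) volume c d :=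
      i2.add (i1.const_mul _)
  rw [this, intervalIntegral.integral_add iA (by simp),
      intervalIntegral.integral_add i2 (i1.const_mul _),
      intervalIntegral.integral_const_mul, intervalIntegral.integral_const, smul_eq_mul] at h
  unfold intAvg
  set P := ∫ t in c..d, φ t
  set Q := ∫ t in c..d, φ t ^ 2
  have hp : P = P / (d - c) * (d - c) := by field_simp
  have hq : Q = Q / (d - c) * (d - c) := by field_simp
  set p := P / (d - c)
  set q := Q / (d - c)
  rw [hp, hq] at h
  have : (q - 2 * M * p + M ^ 2) * (d - c) ≤ V * (d - c) := by linarith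
  have := le_of_mul_le_mul_right this hdc
  nlinarith [sq_nonneg (p - M)]

lemma cov (ε : ℝ) (hε : 0 < ε) (a u : ℝ) (ha : 0 < a) (g : ℝ → ℝ)
    (hg : IntegrableOn (fun t => g t * exp (t / ε)) (Iic u)) :
    IntegrableOn (fun t => g (ε * log t + (u - ε * log a))) (Ioc 0 a) ∧
    ∫ t in Ioc 0 a, g (ε * log t + (u - ε * log a)) =
      a * ε⁻¹ * exp (-u / ε) * ∫ t in Iic u, g t * exp (t / ε) := by
  let T : ℝ → ℝ := fun s => a * exp ((s - u) / ε)
  have hder : ∀ s ∈ Iic u, HasDerivWithinAt T (a * (exp ((s - u) / ε) * (1 / ε))) (Iic u) s := by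
    intro s _
    exact (((((hasDerivAt_id s).sub_const u).div_const ε).exp).const_mul a).hasDerivWithinAt
  have hinj : InjOn T (Iic u) := by
    intro s _ s' _ h
    simp only [T] at h
    have := exp_injective (mul_left_cancel₀ ha.ne' h)
    field_simp at this
    linarith
  have himg : T '' Iic u = Ioc 0 a := by
    ext t
    constructor
    · rintro ⟨s, hs, rfl⟩
      refine ⟨by positivity, ?_⟩
      have : exp ((s - u) / ε) ≤ 1 := by
        rw [exp_le_one_iff]
        exact div_nonpos_of_nonpos_of_nonneg (by linarith [mem_Iic.1 hs]) hε.le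
      simp only [T]
      nlinarith
    · rintro ⟨h0, h1⟩
      refine ⟨u + ε * log (t / a), ?_, ?_⟩
      · have : log (t / a) ≤ 0 := log_nonpos (by positivity) ((div_le_one ha).2 h1)
        simp only [mem_Iic]
        nlinarith
      · simp only [T]
        have : (u + ε * log (t / a) - u) / ε = log (t / a) := by field_simp; ring
        rw [this, exp_log (by positivity)]
        field_simp
  have hpt : (fun s => |a * (exp ((s - u) / ε) * (1 / ε))| • (fun t => g (ε * log t + (u - ε * log a))) (T s))
      = fun s => (a * ε⁻¹ * exp (-u / ε)) * (g s * exp (s / ε)) := by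
    funext s
    have h1 : ε * log (T s) + (u - ε * log a) = s := by
      simp only [T]
      rw [log_mul ha.ne' (exp_pos _).ne', log_exp]
      field_simp
      ring
    simp only [h1, smul_eq_mul]
    rw [abs_of_pos (by positivity)]
    have h2 : exp ((s - u) / ε) = exp (-u / ε) * exp (s / ε) := by
      rw [← exp_add]; congr 1; ring
    rw [h2]
    field_simp
  rw [← himg]
  constructor
  · rw [integrableOn_image_iff_integrableOn_abs_deriv_smul measurableSet_Iic hder hinj, hpt]
    exact hg.const_mul _
  · rw [integral_image_eq_integral_abs_deriv_smul measurableSet_Iic hder hinj, hpt, integral_const_mul]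

noncomputable def extPhi (ε a u : ℝ) : ℝ → ℝ := fun t => min u (ε * log t + (u - ε * log a))

lemma ext_split (ε : ℝ) (hε : 0 < ε) (a u : ℝ) (ha : 0 < a) (ha1 : a ≤ 1) (g : ℝ → ℝ) (v : ℝ)
    (hg : IntegrableOn (fun t => g (ε * log t + (u - ε * log a))) (Ioc 0 a))
    (hv : ∫ t in Ioc 0 a, g (ε * log t + (u - ε * log a)) = v) :
    IntervalIntegrable (fun t => g (extPhi ε a u t)) volume 0 1 ∧
    ∫ t in 0..1, g (extPhi ε a u t) = v + (1 - a) * g u := by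
  have c1 : EqOn (fun t => g (ε * log t + (u - ε * log a))) (fun t => g (extPhi ε a u t)) (Ioc 0 a) := by
    intro t ht
    have h1 : log t ≤ log a := log_le_log ht.1 ht.2
    have h2 : ε * log t ≤ ε * log a := mul_le_mul_of_nonneg_left h1 hε.le
    simp only [extPhi]
    rw [min_eq_right (by linarith)]
  have c2 : EqOn (fun t => g u) (fun t => g (extPhi ε a u t)) (Ioc a 1) := by
    intro t ht
    have h1 : log a ≤ log t := log_le_log ha ht.1.le
    have h2 : ε * log a ≤ ε * log t := mul_le_mul_of_nonneg_left h1 hε.le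
    simp only [extPhi]
    rw [min_eq_left (by linarith)]
  have j1 : IntervalIntegrable (fun t => g (extPhi ε a u t)) volume 0 a := by
    rw [intervalIntegrable_iff_integrableOn_Ioc_of_le ha.le]
    exact hg.congr_fun c1 measurableSet_Ioc
  have hcc : IntegrableOn (fun _ : ℝ => g u) (Ioc a 1) := by simp
  have j2 : IntervalIntegrable (fun t => g (extPhi ε a u t)) volume a 1 := by
    rw [intervalIntegrable_iff_integrableOn_Ioc_of_le ha1]
    exact hcc.congr_fun c2 measurableSet_Ioc
  refine ⟨j1.trans j2, ?_⟩
  rw [← intervalIntegral.integral_add_adjacent_intervals j1 j2,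
    intervalIntegral.integral_of_le ha.le, intervalIntegral.integral_of_le ha1,
    ← setIntegral_congr_fun measurableSet_Ioc c1, hv, ← setIntegral_congr_fun measurableSet_Ioc c2,
    ← intervalIntegral.integral_of_le ha1, intervalIntegral.integral_const, smul_eq_mul]

lemma trunc_sq (u x m : ℝ) : (min u x - min u m) ^ 2 ≤ (x - m) ^ 2 := by
  rcases le_total u x with h | h <;> rcases le_total u m with h' | h' <;>
    simp only [h, h', min_eq_left, min_eq_right] <;> nlinarith

lemma ext_bmo (ε : ℝ) (hε : 0 < ε) (a u : ℝ) (ha : 0 < a) (ha1 : a ≤ 1) :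
    memBMOe ε 0 1 (extPhi ε a u) ∧ (∫ t in 0..1, extPhi ε a u t) = u - a * ε ∧
    (∫ t in 0..1, extPhi ε a u t ^ 2) = u ^ 2 - 2 * a * u * ε + 2 * a * ε ^ 2 := by
  obtain ⟨i2, e2⟩ := log_sq_int 0 a le_rfl ha.le
  have i1 : IntervalIntegrable log volume 0 a := intervalIntegral.intervalIntegrable_log'
  have e1 : ∫ t in 0..a, log t = a * log a - 0 * log 0 - a + 0 := integral_log
  have ic : ∀ k : ℝ, IntervalIntegrable (fun _ : ℝ => k) volume 0 a := fun k => by simp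
  have g1 : IntervalIntegrable (fun t => ε * log t + (u - ε * log a)) volume 0 a :=
    (i1.const_mul _).add (ic _)
  have sqe : (fun t => (ε * log t + (u - ε * log a)) ^ 2) =
      fun t => (ε ^ 2 * log t ^ 2 + 2 * ε * (u - ε * log a) * log t) + (u - ε * log a) ^ 2 := by
    funext t; ring
  have iA : IntervalIntegrable (fun t => ε ^ 2 * log t ^ 2 + 2 * ε * (u - ε * log a) * log t) volume 0 a :=
      (i2.const_mul _).add (i1.const_mul _)
  have g2 : IntervalIntegrable (fun t => (ε * log t + (u - ε * log a)) ^ 2) volume 0 a := by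
    rw [sqe]; exact iA.add (ic _)
  have v1 : ∫ t in 0..a, (ε * log t + (u - ε * log a)) = a * u - a * ε := by
    rw [intervalIntegral.integral_add (i1.const_mul _) (ic _), intervalIntegral.integral_const_mul, e1,
      intervalIntegral.integral_const, smul_eq_mul]
    ring
  have v2 : ∫ t in 0..a, (ε * log t + (u - ε * log a)) ^ 2 = a * u ^ 2 - 2 * a * u * ε + 2 * a * ε ^ 2 := by
    rw [sqe, intervalIntegral.integral_add iA (ic _),
      intervalIntegral.integral_add (i2.const_mul _) (i1.const_mul _),
      intervalIntegral.integral_const_mul, intervalIntegral.integral_const_mul, e1, e2,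
      intervalIntegral.integral_const, smul_eq_mul]
    ring
  rw [intervalIntegral.integral_of_le ha.le] at v1 v2
  obtain ⟨j1, w1⟩ := ext_split ε hε a u ha ha1 (fun x => x) _
    ((intervalIntegrable_iff_integrableOn_Ioc_of_le ha.le).1 g1) v1
  obtain ⟨j2, w2⟩ := ext_split ε hε a u ha ha1 (fun x => x ^ 2) _
    ((intervalIntegrable_iff_integrableOn_Ioc_of_le ha.le).1 g2) v2
  refine ⟨⟨(intervalIntegrable_iff_integrableOn_Ioo_of_le zero_le_one).1 j1,
    (intervalIntegrable_iff_integrableOn_Ioo_of_le zero_le_one).1 j2, ?_⟩, ?_, ?_⟩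
  · intro c d hc hcd hd
    have hss : uIcc c d ⊆ uIcc (0:ℝ) 1 := by
      rw [uIcc_of_le hcd.le, uIcc_of_le zero_le_one]; exact Icc_subset_Icc hc hd
    have k1 := j1.mono_set hss
    have k2 := j2.mono_set hss
    obtain ⟨m, hm1, hm2⟩ := g_var ε (u - ε * log a) c d hc hcd
    apply var_le (extPhi ε a u) c d (min u m) (ε ^ 2) hcd k1 k2
    refine le_trans (intervalIntegral.integral_mono_on hcd.le ?_ hm1 ?_) hm2
    · have : (fun t => (extPhi ε a u t - min u m) ^ 2) =
          fun t => (extPhi ε a u t ^ 2 + (-2 * min u m) * extPhi ε a u t) + (min u m) ^ 2 := by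
        funext t; ring
      rw [this]
      exact (k2.add (k1.const_mul _)).add (by simp)
    · intro t _
      exact trunc_sq u _ m
  · rw [w1]; ring
  · rw [w2]; ring

theorem stmt9 (ε ε₀ : ℝ) (hε : 0 < ε) (hεε₀ : ε < ε₀) (f f3 : ℝ → ℝ)
    (hf : memWcl ε₀ f f3)
    (hneg : ∀ u : ℝ, (∫ t in Iic u, f3 t * Real.exp (t / ε)) ≤ 0) :
    ∀ x ∈ parabStrip ε,
      bellmanFn ε f x.1 x.2 =
        (ε⁻¹ * Real.exp (-(uRpt ε x) / ε) *
            ∫ t in Iic (uRpt ε x), deriv f t * Real.exp (t / ε)) *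
          (x.1 - uRpt ε x) + f (uRpt ε x) := by
  intro x hx
  obtain ⟨m1, m2, hm2c, hm2, hm1, hf2, hf1⟩ := struct ε ε₀ hε hεε₀ f f3 hf hneg
  obtain ⟨x1, x2⟩ := x
  obtain ⟨hx1, hx2⟩ := hx
  simp only at hx1 hx2
  have hsq : sqrt (ε ^ 2 - (x2 - x1 ^ 2)) ^ 2 = ε ^ 2 - (x2 - x1 ^ 2) := Real.sq_sqrt (by linarith)
  have hs0 := Real.sqrt_nonneg (ε ^ 2 - (x2 - x1 ^ 2))
  have hsε : sqrt (ε ^ 2 - (x2 - x1 ^ 2)) ≤ ε := by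
    rw [Real.sqrt_le_left hε.le]; linarith
  have hu : uRpt ε (x1, x2) = x1 + ε - sqrt (ε ^ 2 - (x2 - x1 ^ 2)) := rfl
  generalize uRpt ε (x1, x2) = u at hu
  have hsu : sqrt (ε ^ 2 - (x2 - x1 ^ 2)) = x1 + ε - u := by linarith
  rw [hsu] at hsq hs0 hsε
  clear hu hsu
  simp only
  have hx2e : x2 = u ^ 2 - 2 * u * (u - x1) + 2 * ε * (u - x1) := by nlinarith
  have hfu := hf1 u
  set m0 := ε⁻¹ * exp (-u / ε) * ∫ t in Iic u, deriv f t * exp (t / ε) with hm0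
  unfold bellmanFn
  apply IsGreatest.csSup_eq
  constructor
  · rcases (show x1 ≤ u by linarith).eq_or_lt with h | h
    · subst h
      refine ⟨fun _ => x1, ⟨by simp, by simp, ?_⟩, by simp, ?_, ?_, ?_⟩
      · intro c d _ hcd _
        have : d - c ≠ 0 := by linarith
        simp only [intAvg, intervalIntegral.integral_const, smul_eq_mul]
        rw [mul_div_cancel_left₀ _ this, mul_div_cancel_left₀ _ this]
        nlinarith
      · simp [intAvg]
      · simp only [intAvg, intervalIntegral.integral_const, smul_eq_mul]
        rw [hx2e]; ring
      · simp [intAvg]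
    · set a := (u - x1) / ε with ha'
      have hae : a * ε = u - x1 := by rw [ha']; field_simp
      have ha : 0 < a := div_pos (by linarith) hε
      have ha1 : a ≤ 1 := by rw [ha', div_le_one hε]; linarith
      obtain ⟨hb, w1, w2⟩ := ext_bmo ε hε a u ha ha1
      have hfe := w_int ε ε₀ hε hεε₀ f hf.2.2.1 u
      have hfe' := w_int ε ε₀ hε hεε₀ (deriv f) hf.2.2.2.1 u
      have hbp := bp ε f (deriv f) u
        (fun t => (hf.1.differentiable two_ne_zero t).hasDerivAt) hfe hfe'
      obtain ⟨hc, hcv⟩ := cov ε hε a u ha f hfe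
      obtain ⟨j, w⟩ := ext_split ε hε a u ha ha1 f _ hc hcv
      refine ⟨extPhi ε a u, hb, (intervalIntegrable_iff_integrableOn_Ioo_of_le zero_le_one).1 j, ?_, ?_, ?_⟩
      · rw [intAvg, w1, hae]; ring
      · rw [intAvg, w2, hx2e, ← hae]; ring
      · rw [intAvg, w]
        have hee : exp (-u / ε) * exp (u / ε) = 1 := by
          rw [← exp_add, ← add_div]; simp
        have : x1 - u = -(a * ε) := by linarith
        rw [hm0, hbp, this]
        clear_value a
        generalize exp (-u / ε) = E1 at *
        generalize exp (u / ε) = E2 at *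
        field_simp
        linear_combination (-a * f u * ε) * hee
  · rintro y ⟨φ, hb, hfi, h1, h2, rfl⟩
    have h1' : ∫ t in 0..1, φ t = x1 := by simpa [intAvg] using h1
    have h2' : ∫ t in 0..1, φ t ^ 2 = x2 := by simpa [intAvg] using h2
    have := upper ε hε f m1 m2 hf.1 hm2c hm2 hm1 hf2 φ hb hfi u (by rw [h1']; linarith)
    rw [intervalIntegral.integral_of_le zero_le_one, integral_Ioc_eq_integral_Ioo] at h1' h2'
    rw [h1', h2'] at this
    rw [intAvg, intervalIntegral.integral_of_le zero_le_one, integral_Ioc_eq_integral_Ioo, sub_zero, div_one]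
    refine this.trans (le_of_eq ?_)
    rw [hfu, hx2e]
    ring
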